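/- Let I be a position on the board 𝔖 and A, A′ ∈ 𝔖. If there exists a nonnegative resource count π on 𝔖 such that ⟨χ_I, π⟩ = Σ_{B∈I} π(B) < π(A) + π(A′), then no position reachable from I by legal moves contains both A and A′ (i.e. Height(A, A′, I) = ∞). -/

import Mathlib

def dirs : Finset (ℤ × ℤ) := {(1,0), (-1,0), (0,1), (0,-1)}

def chi (X : ℤ × ℤ) : (ℤ × ℤ) → ℤ := fun Y => if Y = X then 1 else 0

def chiSet (I : Finset (ℤ × ℤ)) : (ℤ × ℤ) → ℤ := fun P => if P ∈ I then 1 else 0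

def IsMove (S : Finset (ℤ × ℤ)) (g : (ℤ × ℤ) → ℤ) : Prop :=
  ∃ P d : ℤ × ℤ, d ∈ dirs ∧ P ∈ S ∧ P + d ∈ S ∧ P + d + d ∈ S ∧
    g = chi P + chi (P + d) - chi (P + d + d)

def IsMiddle (S : Finset (ℤ × ℤ)) (Q : ℤ × ℤ) : Prop :=
  ∃ P d : ℤ × ℤ, d ∈ dirs ∧ P ∈ S ∧ P + d ∈ S ∧ P + d + d ∈ S ∧ Q = P + d

def Neighbor (S : Finset (ℤ × ℤ)) (A B : ℤ × ℤ) : Prop :=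
  ∃ d ∈ dirs, A ∈ S ∧ A + d ∈ S ∧ A + d + d ∈ S ∧ B = A + d + d

def NoIsolatedPoint (S : Finset (ℤ × ℤ)) : Prop :=
  ∀ P ∈ S, ∃ Q, Relation.EqvGen (Neighbor S) P Q ∧ IsMiddle S Q

def IsResourceCount (S : Finset (ℤ × ℤ)) (π : (ℤ × ℤ) → ℝ) : Prop :=
  ∀ P d : ℤ × ℤ, d ∈ dirs → P ∈ S → P + d ∈ S → P + d + d ∈ S →
    π (P + d + d) ≤ π P + π (P + d)

def LegalMove (S I : Finset (ℤ × ℤ)) (g : (ℤ × ℤ) → ℤ) (I' : Finset (ℤ × ℤ)) : Prop :=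
  ∃ P d : ℤ × ℤ, d ∈ dirs ∧ P ∈ S ∧ P + d ∈ S ∧ P + d + d ∈ S ∧
    g = chi P + chi (P + d) - chi (P + d + d) ∧
    P ∈ I ∧ P + d ∈ I ∧ P + d + d ∉ I ∧
    I' = (I \ {P, P + d}) ∪ {P + d + d}

def Transforms (S : Finset (ℤ × ℤ)) :
    List ((ℤ × ℤ) → ℤ) → Finset (ℤ × ℤ) → Finset (ℤ × ℤ) → Prop
  | [], I, J => I = J
  | g :: L, I, J => ∃ I', LegalMove S I g I' ∧ Transforms S L I' J

def boxProd (g₁ g₂ : (ℤ × ℤ) → ℤ) : Sym2 (ℤ × ℤ) → ℤ :=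
  Sym2.lift ⟨fun A B => if A = B then g₁ A * g₂ A else g₁ A * g₂ B + g₁ B * g₂ A, by
    intro A B
    by_cases h : A = B
    · subst h; rfl
    · simp only [if_neg h, if_neg (Ne.symm h)]; ring⟩

def moveAbs (g : (ℤ × ℤ) → ℤ) : (ℤ × ℤ) → ℤ := fun A => |g A|

def IsQMove (S : Finset (ℤ × ℤ)) (c : Sym2 (ℤ × ℤ) → ℤ) : Prop :=
  (∃ A g, A ∈ S ∧ IsMove S g ∧ g A = 0 ∧ c = boxProd (fun B => 2 * chi A B) g) ∨
  (∃ g, IsMove S g ∧ c = boxProd (moveAbs g) g)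

def StepList (S : Finset (ℤ × ℤ)) :
    List (Finset (ℤ × ℤ)) → List ((ℤ × ℤ) → ℤ) → Prop
  | [_], [] => True
  | I :: I' :: Ps, g :: L => LegalMove S I g I' ∧ StepList S (I' :: Ps) L
  | _, _ => False

def pOfSeq (A : ℤ × ℤ) : List (Finset (ℤ × ℤ)) → List ((ℤ × ℤ) → ℤ) → ℕ
  | I :: Ps, g :: L => (if g A ≠ 0 then 1 else if A ∈ I then 1 else 0) + pOfSeq A Ps L
  | _, _ => 0

def bothCount (A A' : ℤ × ℤ) : List ((ℤ × ℤ) → ℤ) → ℕ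
  | [] => 0
  | g :: L => (if g A ≠ 0 ∧ g A' ≠ 0 then 1 else 0) + bothCount A A' L

noncomputable def pagoda (P : ℤ × ℤ) : ℝ := ((Real.sqrt 5 - 1) / 2) ^ (P.1.natAbs + P.2.natAbs)

theorem LegalMove.subset {S I I' : Finset (ℤ × ℤ)} {g : (ℤ × ℤ) → ℤ}
    (h : LegalMove S I g I') (hI : I ⊆ S) : I' ⊆ S := by
  obtain ⟨P, d, -, -, -, hR, -, -, -, -, rfl⟩ := h
  exact Finset.union_subset (Finset.sdiff_subset.trans hI) (Finset.singleton_subset_iff.2 hR)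

theorem add_dir_ne_self {d : ℤ × ℤ} (hd : d ∈ dirs) (P : ℤ × ℤ) : P + d ≠ P := by
  rw [Ne, add_eq_left]
  rintro rfl
  exact absurd hd (by decide)

/-- A legal move does not increase the total value of a resource count. -/
theorem LegalMove.sum_le {S I I' : Finset (ℤ × ℤ)} {g : (ℤ × ℤ) → ℤ} {π : (ℤ × ℤ) → ℝ}
    (h : LegalMove S I g I') (hπ : IsResourceCount S π) :
    ∑ B ∈ I', π B ≤ ∑ B ∈ I, π B := by
  obtain ⟨P, d, hd, hP, hQ, hR, -, hPI, hQI, hRI, rfl⟩ := h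
  have hsub : ({P, P + d} : Finset (ℤ × ℤ)) ⊆ I := by
    simp [Finset.insert_subset_iff, hPI, hQI]
  have hdisj : Disjoint (I \ {P, P + d}) {P + d + d} := by
    simp [hRI]
  rw [Finset.sum_union hdisj, Finset.sum_singleton, ← Finset.sum_sdiff hsub,
    Finset.sum_pair (add_dir_ne_self hd P).symm]
  exact add_le_add_right (hπ P d hd hP hQ hR) _

/-- If there is a nonnegative resource count `π` with `⟨χ_I,π⟩ < π(A) + π(A')`,
then no position reachable from `I` contains both `A` and `A'`
(i.e. `Height(A,A',I) = ∞`). -/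
theorem infinite_pair_height_criterion (S I : Finset (ℤ × ℤ)) (hI : I ⊆ S)
    (A A' : ℤ × ℤ) (hA : A ∈ S) (hA' : A' ∈ S) (hne : A ≠ A')
    (π : (ℤ × ℤ) → ℝ) (hπ : IsResourceCount S π) (hnonneg : ∀ B ∈ S, 0 ≤ π B)
    (hlt : ∑ B ∈ I, π B < π A + π A') :
    ∀ (L : List ((ℤ × ℤ) → ℤ)) (K : Finset (ℤ × ℤ)),
      Transforms S L I K → ¬(A ∈ K ∧ A' ∈ K) := by
  intro L
  induction L generalizing I with
  | nil =>
    rintro K rfl ⟨hAK, hAK'⟩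
    have hsub : ({A, A'} : Finset (ℤ × ℤ)) ⊆ I := by
      simp [Finset.insert_subset_iff, hAK, hAK']
    have hle := Finset.sum_le_sum_of_subset_of_nonneg hsub fun B hB _ => hnonneg B (hI hB)
    rw [Finset.sum_pair hne] at hle
    exact absurd hlt hle.not_gt
  | cons g L ih =>
    rintro K ⟨I', hmove, hL⟩
    exact ih I' (hmove.subset hI) ((hmove.sum_le hπ).trans_lt hlt) K hL
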